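/- Let \(\widehat{N} = \begin{pmatrix} \widehat{A} & \widehat{B} \\ I & O \end{pmatrix}\) where \(\widehat{A}\) and \(\widehat{B}\) are square dual complex matrices of the same order with dual Drazin inverses of indices \(i_{\widehat{A}}\) and \(i_{\widehat{B}}\), respectively. Assume \(\widehat{A}\widehat{A}^\pi \widehat{B} = \widehat{B}\widehat{A}\widehat{A}^\pi\) and \(\widehat{A}\widehat{A}\widehat{A}^D \widehat{B} = O\). Then \(\begin{pmatrix} \sum_{i=0}^{i_{\widehat{B}}-1} \widehat{B}^\pi \widehat{B}^i (\widehat{A}^D)^{2i+1} & \widehat{B}\widehat{B}^D \\ \sum_{i=0}^{i_{\widehat{B}}-1} \widehat{B}^\pi \widehat{B}^i (\widehat{A}^D)^{2i+2} + \widehat{B}^D \widehat{A}^\pi & -\widehat{A}\widehat{A}^\pi \widehat{B}^D \end{pmatrix}\) is a dual Drazin inverse of \(\widehat{N}\). -/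

import Mathlib

open Matrix Finset

abbrev DC := DualNumber ℂ

/-!
Write `Q = A (1 - A Aᴰ)` and split the companion matrix as `N = P + M` with
`P = [[A A Aᴰ, 0], [0, 0]]` and `M = [[Q, B], [1, 0]]`. The hypothesis `A A Aᴰ B = 0` gives
`P M = 0`, so the one-sided additive formula expresses a Drazin inverse of `N` through those of `P`
and `M`. The summand `P` has index at most one, with Drazin inverse `[[Aᴰ, 0], [0, 0]]`. For `M`,
put `C = [[0, B], [1, -Q]]`: since `Q` commutes with `B`, `M C = C M = diag(B, B)`, while
`M - C = diag(Q, Q)` is nilpotent. Hence `diag(Bᴰ, Bᴰ) C` is a Drazin inverse of `M`.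
-/

/-- `d` is a Drazin inverse of `a` with index `k`. The exponent `k` need not be minimal; `k = 1` is
the case of a group inverse. -/
structure IsDrazinInverse {R : Type*} [Monoid R] (a d : R) (k : ℕ) : Prop where
  pow_succ_mul : a ^ (k + 1) * d = a ^ k
  mul_mul_self : d * a * d = d
  commute : Commute a d

theorem pow_mul_one_sub_eq_zero_iff {R : Type*} [Ring R] {a d : R} {k : ℕ} :
    a ^ k * (1 - a * d) = 0 ↔ a ^ (k + 1) * d = a ^ k := by
  rw [mul_sub, mul_one, ← mul_assoc, ← pow_succ, sub_eq_zero, eq_comm]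

theorem add_pow_mul_of_mul_eq_zero {R : Type*} [Semiring R] {p m r : R} (hpm : p * m = 0)
    (hpr : p * r = 0) (j : ℕ) : (p + m) ^ j * r = m ^ j * r := by
  have hp (j : ℕ) : p * (m ^ j * r) = 0 := by
    cases j with
    | zero => simpa using hpr
    | succ j => rw [pow_succ', mul_assoc, ← mul_assoc, hpm, zero_mul]
  induction j with
  | zero => simp
  | succ j ih => rw [pow_succ', mul_assoc, ih, add_mul, hp, zero_add, ← mul_assoc, ← pow_succ']

theorem fromBlocks_sub_fromBlocks {l m n o α : Type*} [AddGroup α] (A A' : Matrix n l α)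
    (B B' : Matrix n m α) (C C' : Matrix o l α) (D D' : Matrix o m α) :
    fromBlocks A B C D - fromBlocks A' B' C' D' =
      fromBlocks (A - A') (B - B') (C - C') (D - D') := by
  simp only [sub_eq_add_neg, fromBlocks_neg, fromBlocks_add]

namespace IsDrazinInverse

section Monoid

variable {R : Type*} [Monoid R] {a d : R} {k : ℕ}

theorem self_mul_mul (h : IsDrazinInverse a d k) : a * d * d = d := by
  rw [h.commute.eq, h.mul_mul_self]

theorem mul_mul_of_eq_mul (h : IsDrazinInverse a d k) {x y : R} (hx : x = y * d) :
    x * (a * d) = x := by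
  rw [hx, mul_assoc, ← mul_assoc d, h.mul_mul_self]

theorem isIdempotentElem (h : IsDrazinInverse a d k) : IsIdempotentElem (a * d) := by
  rw [IsIdempotentElem, mul_assoc, ← mul_assoc d, h.mul_mul_self]

theorem mul_mul_eq_self (h : IsDrazinInverse a d 1) : a * d * a = a := by
  rw [mul_assoc, ← h.commute.eq, ← mul_assoc, ← pow_two, h.pow_succ_mul, pow_one]

theorem pow_mul_pow_succ (h : IsDrazinInverse a d k) (j : ℕ) : a ^ j * d ^ (j + 1) = d := by
  induction j with
  | zero => simp
  | succ j ih =>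
    calc a ^ (j + 1) * d ^ (j + 2) = a * (a ^ j * d ^ (j + 1)) * d := by
          rw [pow_succ' a, pow_succ d]; simp only [mul_assoc]
      _ = d := by rw [ih, h.self_mul_mul]

theorem pow_add_mul_pow (h : IsDrazinInverse a d k) (j : ℕ) : a ^ (k + j) * d ^ j = a ^ k := by
  induction j with
  | zero => simp
  | succ j ih =>
    calc a ^ (k + (j + 1)) * d ^ (j + 1) = a ^ j * (a ^ (k + 1) * d) * d ^ j := by
          rw [show k + (j + 1) = j + (k + 1) by omega, pow_add, pow_succ' d]; simp only [mul_assoc]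
      _ = a ^ k := by rw [h.pow_succ_mul, ← pow_add, add_comm, ih]

theorem commute_of_commute (h : IsDrazinInverse a d k) {q : R} (hq : Commute q a) :
    Commute q d := by
  have hpow : d ^ (k + 1) * a ^ k = d := by
    rw [← (h.commute.pow_pow k (k + 1)).eq, h.pow_mul_pow_succ]
  have hpow' : d ^ (k + 1) * a ^ (k + (k + 1)) = a ^ k := by
    rw [← (h.commute.pow_pow _ (k + 1)).eq, h.pow_add_mul_pow]
  calc q * d = q * a ^ k * d ^ (k + 1) := by rw [mul_assoc, h.pow_mul_pow_succ]
    _ = a ^ k * q * d ^ (k + 1) := by rw [(hq.pow_right k).eq]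
    _ = d ^ (k + 1) * (a ^ (k + (k + 1)) * q) * d ^ (k + 1) := by rw [← mul_assoc, hpow']
    _ = d ^ (k + 1) * q * (a ^ (k + (k + 1)) * d ^ (k + 1)) := by
        rw [← (hq.pow_right _).eq]; simp only [mul_assoc]
    _ = d ^ (k + 1) * (a ^ k * q) := by
        rw [h.pow_add_mul_pow, mul_assoc, (hq.pow_right k).eq]
    _ = d * q := by rw [← mul_assoc, hpow]

theorem core (h : IsDrazinInverse a d k) : IsDrazinInverse (a * (a * d)) d 1 where
  pow_succ_mul := by
    calc (a * (a * d)) ^ 2 * d = a * (a * d) * (a * (a * d * d)) := by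
          rw [pow_two]; simp only [mul_assoc]
      _ = a * (a * d * (a * d)) := by rw [h.self_mul_mul]; simp only [mul_assoc]
      _ = (a * (a * d)) ^ 1 := by rw [h.isIdempotentElem.eq, pow_one]
  mul_mul_self := by
    calc d * (a * (a * d)) * d = d * a * (a * d * d) := by simp only [mul_assoc]
      _ = d := by rw [h.self_mul_mul, h.mul_mul_self]
  commute := h.commute.mul_left (h.commute.mul_left (Commute.refl d))

end Monoid

section MonoidWithZero

variable {M₀ : Type*} [MonoidWithZero M₀] {a d x : M₀} {k : ℕ}

theorem mul_eq_zero_left (h : IsDrazinInverse a d k) (hx : a * x = 0) : d * x = 0 := by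
  rw [← h.mul_mul_self, mul_assoc d, h.commute.eq, mul_assoc, mul_assoc, hx, mul_zero, mul_zero]

theorem mul_eq_zero_right (h : IsDrazinInverse a d k) (hx : x * a = 0) : x * d = 0 := by
  rw [← h.self_mul_mul, ← mul_assoc, ← mul_assoc, hx, zero_mul, zero_mul]

end MonoidWithZero

section Ring

variable {R : Type*} [Ring R] {a d : R} {k : ℕ}

theorem pow_mul_one_sub (h : IsDrazinInverse a d k) : a ^ k * (1 - a * d) = 0 :=
  pow_mul_one_sub_eq_zero_iff.mpr h.pow_succ_mul

theorem commute_one_sub (h : IsDrazinInverse a d k) {q : R} (hq : Commute q a) :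
    Commute q (1 - a * d) :=
  (Commute.one_right q).sub_right (hq.mul_right (h.commute_of_commute hq))

theorem mul_one_sub (h : IsDrazinInverse a d k) : d * (1 - a * d) = 0 := by
  rw [mul_sub, mul_one, ← mul_assoc, h.mul_mul_self, sub_self]

theorem core_mul_self_mul_one_sub (h : IsDrazinInverse a d k) :
    a * (a * d) * (a * (1 - a * d)) = 0 := by
  calc a * (a * d) * (a * (1 - a * d)) = a * a * (d * a * (1 - a * d)) := by
        simp only [mul_assoc]
    _ = 0 := by rw [← h.commute.eq, mul_assoc a d, h.mul_one_sub, mul_zero, mul_zero]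

theorem isNilpotent_mul_one_sub (h : IsDrazinInverse a d k) :
    IsNilpotent (a * (1 - a * d)) :=
  ⟨k + 1, by
    rw [(h.commute_one_sub (Commute.refl a)).mul_pow, h.isIdempotentElem.one_sub.pow_succ_eq,
      pow_succ', mul_assoc, h.pow_mul_one_sub, mul_zero]⟩

theorem exists_of_isNilpotent (hd : d * a * d = d) (hc : Commute a d)
    (hn : IsNilpotent (a * (1 - a * d))) : ∃ s, IsDrazinInverse a d s := by
  obtain ⟨s, hs⟩ := hn
  have hidem : IsIdempotentElem (a * d) := by
    rw [IsIdempotentElem, mul_assoc, ← mul_assoc d, hd]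
  have hcomm : Commute a (1 - a * d) :=
    (Commute.one_right a).sub_right ((Commute.refl a).mul_right hc)
  have hzero : a ^ (s + 1) * (1 - a * d) = 0 := by
    rw [← hidem.one_sub.pow_succ_eq s, ← hcomm.mul_pow, pow_succ, hs, zero_mul]
  exact ⟨s + 1, pow_mul_one_sub_eq_zero_iff.mp hzero, hd, hc⟩

theorem exists_of_isNilpotent_sub {m c x : R} (hmc : Commute m c) (hn : IsNilpotent (m - c))
    (hx : IsDrazinInverse (m * c) x k) : ∃ s, IsDrazinInverse m (x * c) s := by
  have hm : Commute m (m * c) := (Commute.refl m).mul_right hmc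
  have hc : Commute c (m * c) := hmc.symm.mul_right (Commute.refl c)
  have hmx : Commute m x := hx.commute_of_commute hm
  have hcx : Commute c x := hx.commute_of_commute hc
  have houter : x * c * m * (x * c) = x * c := by
    rw [mul_assoc x, ← hmc.eq, ← mul_assoc (x * _), hx.mul_mul_self]
  refine exists_of_isNilpotent houter (hmx.mul_right hmc) ?_
  rw [← hcx.eq, ← mul_assoc]
  set p := 1 - m * c * x
  have hmp : Commute m p := hx.commute_one_sub hm
  have hcp : Commute c p := hx.commute_one_sub hc
  have hpp : p * p = p := hx.isIdempotentElem.one_sub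
  have hsq : (m * p) ^ 2 = (m - c) * (m * p) + m * c * p := by
    calc (m * p) ^ 2 = m * m * p := by
          rw [hmp.mul_pow, pow_two, pow_two, hpp]
      _ = (m - c) * (m * p) + m * c * p := by
          rw [sub_mul, ← mul_assoc c, hmc.eq, mul_assoc, mul_assoc, sub_add_cancel]
  have hsub : Commute (m - c) (m * p) :=
    ((Commute.refl m).sub_left hmc.symm).mul_right (hmp.sub_left hcp)
  have hsub' : Commute (m - c) (m * c * p) :=
    (hm.sub_left hc).mul_right (hmp.sub_left hcp)
  have hmp' : Commute (m * p) (m * c * p) :=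
    (hm.mul_right hmp).mul_left ((hmp.symm.mul_right hcp.symm).mul_right (Commute.refl p))
  refine IsNilpotent.of_pow (m := 2) ?_
  rw [hsq]
  exact (hsub'.mul_left hmp').isNilpotent_add (hsub.isNilpotent_mul_right hn)
    hx.isNilpotent_mul_one_sub

theorem sum_eq_add_mul_sum_mul (h : IsDrazinInverse a d k) (y x : R) :
    ∑ i ∈ range k, (1 - a * d) * a ^ i * (y * x ^ i) =
      (1 - a * d) * y + a * (∑ i ∈ range k, (1 - a * d) * a ^ i * (y * x ^ i)) * x := by
  set p := 1 - a * d
  have hcomm : Commute a p := h.commute_one_sub (Commute.refl a)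
  have hlast : p * a ^ k * (y * x ^ k) = 0 := by
    rw [← (hcomm.pow_left k).eq, h.pow_mul_one_sub, zero_mul]
  have hshift : a * (∑ i ∈ range k, p * a ^ i * (y * x ^ i)) * x =
      ∑ i ∈ range k, p * a ^ (i + 1) * (y * x ^ (i + 1)) := by
    rw [mul_sum, sum_mul]
    refine sum_congr rfl fun i _ => ?_
    rw [← mul_assoc a, ← mul_assoc a, hcomm.eq, pow_succ' a, pow_succ x]
    simp only [mul_assoc]
  calc ∑ i ∈ range k, p * a ^ i * (y * x ^ i)
      = ∑ i ∈ range (k + 1), p * a ^ i * (y * x ^ i) := by rw [sum_range_succ, hlast, add_zero]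
    _ = p * y + a * (∑ i ∈ range k, p * a ^ i * (y * x ^ i)) * x := by
        rw [sum_range_succ', hshift, pow_zero, pow_zero, mul_one, mul_one, add_comm]

theorem mul_sum_eq_zero (h : IsDrazinInverse a d k) (y x : R) :
    d * ∑ i ∈ range k, (1 - a * d) * a ^ i * (y * x ^ i) = 0 := by
  rw [mul_sum]
  exact sum_eq_zero fun i _ => by simp only [← mul_assoc, h.mul_one_sub, zero_mul]

theorem mul_sum_eq_zero_of_commute (h : IsDrazinInverse a d k) {q y : R} (hq : Commute q a)
    (hqy : q * y = 0) (x : R) :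
    q * ∑ i ∈ range k, (1 - a * d) * a ^ i * (y * x ^ i) = 0 := by
  rw [mul_sum]
  refine sum_eq_zero fun i _ => ?_
  have hcomm : Commute q ((1 - a * d) * a ^ i) :=
    (h.commute_one_sub hq).mul_right (hq.pow_right i)
  rw [← mul_assoc, hcomm.eq, mul_assoc, ← mul_assoc q, hqy, zero_mul, mul_zero]

section Additive

variable {p p' m m' s : R}

theorem add_mul_add_mul_one_sub (hm : IsDrazinInverse m m' k) (hpm : p * m = 0)
    (hs : s = (1 - m * m' + m * s) * p') :
    (p + m) * (s + m' * (1 - p * p')) = m * s + p * p' + m * m' * (1 - p * p') := by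
  have hpm' : p * m' = 0 := hm.mul_eq_zero_right hpm
  have hps : p * s = p * p' := by
    calc p * s = p * (1 - m * m' + m * s) * p' := by rw [mul_assoc, ← hs]
      _ = (p - p * m * m' + p * m * s) * p' := by noncomm_ring
      _ = p * p' := by rw [hpm, zero_mul, zero_mul, sub_zero, add_zero]
  calc (p + m) * (s + m' * (1 - p * p'))
      = m * s + p * s + p * m' * (1 - p * p') + m * m' * (1 - p * p') := by noncomm_ring
    _ = m * s + p * p' + m * m' * (1 - p * p') := by rw [hps, hpm', zero_mul, add_zero]

theorem add_mul_one_sub_mul_add (hp : IsDrazinInverse p p' 1) (hm : IsDrazinInverse m m' k)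
    (hpm : p * m = 0) (hs : s = (1 - m * m' + m * s) * p') :
    (s + m' * (1 - p * p')) * (p + m) = m * s + p * p' + m * m' * (1 - p * p') := by
  have hp'm : p' * m = 0 := hp.mul_eq_zero_left hpm
  have hsm : s * m = 0 := by rw [hs, mul_assoc, hp'm, mul_zero]
  have hsp : s * p = (1 - m * m') * (p * p') + m * s := by
    calc s * p = (1 - m * m' + m * s) * (p * p') := by
          rw [hp.commute.eq, ← mul_assoc, ← hs]
      _ = (1 - m * m') * (p * p') + m * (s * (p * p')) := by noncomm_ring
      _ = (1 - m * m') * (p * p') + m * s := by rw [hp.mul_mul_of_eq_mul hs]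
  calc (s + m' * (1 - p * p')) * (p + m)
      = s * p + s * m + m' * (p - p * p' * p) + m' * m - m' * p * (p' * m) := by noncomm_ring
    _ = s * p + m * m' := by rw [hsm, hp.mul_mul_eq_self, hp'm, hm.commute.eq]; simp
    _ = m * s + p * p' + m * m' * (1 - p * p') := by rw [hsp]; noncomm_ring

-- The equation for `s` is solved by `s = ∑ i < l, (1 - m * m') * m ^ i * p' ^ (i + 1)` for large
-- `l`, which is the form in which the additive formula is usually stated.
theorem add_of_mul_eq_zero (hp : IsDrazinInverse p p' 1) (hm : IsDrazinInverse m m' k)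
    (hpm : p * m = 0) (hms : m' * s = 0) (hs : s = (1 - m * m' + m * s) * p') :
    IsDrazinInverse (p + m) (s + m' * (1 - p * p')) k := by
  have hp'm : p' * m = 0 := hp.mul_eq_zero_left hpm
  have hsm : s * m = 0 := by rw [hs, mul_assoc, hp'm, mul_zero]
  have hpe : p * (p * p') = p := by rw [hp.commute.eq, ← mul_assoc, hp.mul_mul_eq_self]
  have hmm's : m * m' * (m * s) = 0 := by
    rw [mul_assoc, ← mul_assoc m', ← hm.commute.eq, mul_assoc m, hms, mul_zero, mul_zero]
  have hmul := hm.add_mul_add_mul_one_sub hpm hs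
  have hmul' := hp.add_mul_one_sub_mul_add hm hpm hs
  have hcompl : 1 - (p + m) * (s + m' * (1 - p * p')) =
      (1 - m * m') * (1 - p * p' - m * s) := by
    calc 1 - (p + m) * (s + m' * (1 - p * p'))
        = (1 - m * m') * (1 - p * p' - m * s) - m * m' * (m * s) := by rw [hmul]; noncomm_ring
      _ = (1 - m * m') * (1 - p * p' - m * s) := by rw [hmm's, sub_zero]
  have hann : p * (1 - (p + m) * (s + m' * (1 - p * p'))) = 0 := by
    calc p * (1 - (p + m) * (s + m' * (1 - p * p')))
        = p - p * (p * p') - p * m * (s + m' * (1 - p * p')) := by rw [hmul]; noncomm_ring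
      _ = 0 := by rw [hpe, hpm, zero_mul, sub_self, sub_zero]
  refine ⟨?_, ?_, hmul.trans hmul'.symm⟩
  · rw [← pow_mul_one_sub_eq_zero_iff, add_pow_mul_of_mul_eq_zero hpm hann, hcompl, ← mul_assoc,
      hm.pow_mul_one_sub, zero_mul]
  · rw [mul_assoc, hmul]
    calc (s + m' * (1 - p * p')) * (m * s + p * p' + m * m' * (1 - p * p'))
        = s * m * (s + m' * (1 - p * p')) + s * (p * p') + m' * m * s
          + m' * (p * p' - p * p' * (p * p')) + m' * m * m' * (1 - p * p')
          - m' * p * (p' * m) * (s + m' * (1 - p * p')) := by noncomm_ring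
      _ = s + m' * (1 - p * p') := by
          rw [hsm, hp.mul_mul_of_eq_mul hs, ← hm.commute.eq, mul_assoc m, hms,
            hp.isIdempotentElem.eq, hm.self_mul_mul, hp'm]
          simp

end Additive

end Ring

section Matrix

variable {l n K : Type*} [Fintype l] [Fintype n] [DecidableEq l] [DecidableEq n] [Ring K]

theorem fromBlocks_diagonal {A A' : Matrix l l K} {D D' : Matrix n n K} {k : ℕ}
    (hA : IsDrazinInverse A A' k) (hD : IsDrazinInverse D D' k) :
    IsDrazinInverse (fromBlocks A 0 0 D) (fromBlocks A' 0 0 D') k where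
  pow_succ_mul := by
    simp [fromBlocks_diagonal_pow, fromBlocks_multiply, hA.pow_succ_mul, hD.pow_succ_mul]
  mul_mul_self := by simp [fromBlocks_multiply, hA.mul_mul_self, hD.mul_mul_self]
  commute := by simp [Commute, SemiconjBy, fromBlocks_multiply, hA.commute.eq, hD.commute.eq]

theorem exists_fromBlocks_of_isNilpotent {Q B B' : Matrix n n K} {k : ℕ}
    (hB : IsDrazinInverse B B' k) (hQB : Commute Q B) (hQ : IsNilpotent Q) :
    ∃ s, IsDrazinInverse (fromBlocks Q B 1 0) (fromBlocks 0 (B * B') B' (-(Q * B'))) s := by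
  have hmul : fromBlocks Q B 1 0 * fromBlocks 0 B 1 (-Q) = fromBlocks B 0 0 B := by
    simp [fromBlocks_multiply, hQB.eq]
  have hmul' : fromBlocks 0 B 1 (-Q) * fromBlocks Q B 1 0 = fromBlocks B 0 0 B := by
    simp [fromBlocks_multiply]
  have hsub : fromBlocks Q B 1 0 - fromBlocks 0 B 1 (-Q) = fromBlocks Q 0 0 Q := by
    simp [fromBlocks_sub_fromBlocks]
  have hnil : IsNilpotent (fromBlocks Q 0 0 Q) :=
    hQ.imp fun j hj => by rw [fromBlocks_diagonal_pow, hj, fromBlocks_zero]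
  have hB' : fromBlocks B' 0 0 B' * fromBlocks 0 B 1 (-Q) =
      fromBlocks 0 (B * B') B' (-(Q * B')) := by
    simp [fromBlocks_multiply, hB.commute.eq, (hB.commute_of_commute hQB).eq]
  rw [← hB']
  exact exists_of_isNilpotent_sub (hmul.trans hmul'.symm) (hsub ▸ hnil)
    (hmul ▸ hB.fromBlocks_diagonal hB)

theorem exists_fromBlocks_companion {A A' B B' S : Matrix n n K} {k j : ℕ}
    (hA : IsDrazinInverse A A' k) (hB : IsDrazinInverse B B' j)
    (hc : Commute (A * (1 - A * A')) B) (h0 : A * (A * A') * B = 0)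
    (hS : S = (1 - B * B' + B * (S * A')) * A') (hB'S : B' * S = 0)
    (hAS : A * (1 - A * A') * S = 0) :
    ∃ s, IsDrazinInverse (fromBlocks A B 1 0)
      (fromBlocks S (B * B') (S * A' + B' * (1 - A * A')) (-(A * (1 - A * A') * B'))) s := by
  obtain ⟨s, hM⟩ := hB.exists_fromBlocks_of_isNilpotent hc hA.isNilpotent_mul_one_sub
  have hAAQ : A * (A * A') * (A * (1 - A * A')) = 0 := hA.core_mul_self_mul_one_sub
  have hAAA' : A * (A * A') * A' = A * A' := by rw [mul_assoc, hA.self_mul_mul]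
  set Q := A * (1 - A * A') with hQ
  have hQBB' : Q * (B * B') = B * (Q * B') := by rw [← mul_assoc, hc.eq, mul_assoc]
  have hB'SA' : B' * (S * A') = 0 := by rw [← mul_assoc, hB'S, zero_mul]
  have hzero : IsDrazinInverse (0 : Matrix n n K) 0 1 := ⟨by simp, by simp, Commute.refl 0⟩
  have hP : IsDrazinInverse (fromBlocks (A * (A * A')) 0 0 0) (fromBlocks A' 0 0 0) 1 :=
    hA.core.fromBlocks_diagonal hzero
  have hPM : fromBlocks (A * (A * A')) 0 0 (0 : Matrix n n K) * fromBlocks Q B 1 0 = 0 := by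
    simp [fromBlocks_multiply, hAAQ, h0]
  have hM'S : fromBlocks 0 (B * B') B' (-(Q * B')) *
      fromBlocks S 0 (S * A') (0 : Matrix n n K) = 0 := by
    simp [fromBlocks_multiply, mul_assoc, hB'S, hB'SA']
  have hS_blocks : fromBlocks S 0 (S * A') 0 =
      (1 - fromBlocks Q B 1 0 * fromBlocks 0 (B * B') B' (-(Q * B')) +
        fromBlocks Q B 1 0 * fromBlocks S 0 (S * A') 0) * fromBlocks A' 0 0 0 := by
    simp [← fromBlocks_one, fromBlocks_multiply, fromBlocks_sub_fromBlocks, fromBlocks_add,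
      hQBB', hAS, ← hS]
  have hN : fromBlocks (A * (A * A')) 0 0 (0 : Matrix n n K) + fromBlocks Q B 1 0 =
      fromBlocks A B 1 0 := by
    simp [fromBlocks_add, hQ, mul_sub]
  have hX : fromBlocks S 0 (S * A') 0 + fromBlocks 0 (B * B') B' (-(Q * B')) *
      (1 - fromBlocks (A * (A * A')) 0 0 0 * fromBlocks A' 0 0 (0 : Matrix n n K)) =
      fromBlocks S (B * B') (S * A' + B' * (1 - A * A')) (-(Q * B')) := by
    simp [← fromBlocks_one, fromBlocks_multiply, fromBlocks_sub_fromBlocks, fromBlocks_add, hAAA']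
  exact ⟨s, hN ▸ hX ▸ hP.add_of_mul_eq_zero hM hPM hM'S hS_blocks⟩

end Matrix

end IsDrazinInverse

theorem stmt10_general {n K : Type*} [Fintype n] [DecidableEq n] [Ring K]
    {A AD B BD : Matrix n n K} {iA iB : ℕ} (hA : IsDrazinInverse A AD iA)
    (hB : IsDrazinInverse B BD iB) (hc : Commute (A * (1 - A * AD)) B)
    (h0 : A * (A * AD) * B = 0) :
    ∃ s, IsDrazinInverse (fromBlocks A B 1 0)
      (fromBlocks (∑ i ∈ range iB, (1 - B * BD) * B ^ i * AD ^ (2 * i + 1)) (B * BD)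
        ((∑ i ∈ range iB, (1 - B * BD) * B ^ i * AD ^ (2 * i + 2)) + BD * (1 - A * AD))
        (-(A * (1 - A * AD) * BD))) s := by
  have hAAD : A * (1 - A * AD) * AD = 0 := by
    rw [mul_assoc, sub_mul, one_mul, hA.self_mul_mul, sub_self, mul_zero]
  have hSAD : ∑ i ∈ range iB, (1 - B * BD) * B ^ i * AD ^ (2 * i + 2) =
      (∑ i ∈ range iB, (1 - B * BD) * B ^ i * AD ^ (2 * i + 1)) * AD := by
    simp only [sum_mul, mul_assoc, pow_succ]
  have hpow (i : ℕ) : AD ^ (2 * i + 1) = AD * (AD ^ 2) ^ i := by rw [← pow_mul, ← pow_succ']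
  simp only [hSAD, hpow]
  refine hA.exists_fromBlocks_companion hB hc h0 ?_ (hB.mul_sum_eq_zero AD (AD ^ 2))
    (hB.mul_sum_eq_zero_of_commute hc hAAD (AD ^ 2))
  rw [add_mul, mul_assoc B, mul_assoc _ AD, ← pow_two, ← mul_assoc]
  exact hB.sum_eq_add_mul_sum_mul AD (AD ^ 2)

theorem stmt10 {n : ℕ} (A AD B BD : Matrix (Fin n) (Fin n) DC) (iA iB : ℕ)
    (hA1 : A ^ (iA + 1) * AD = A ^ iA) (hA2 : AD * A * AD = AD) (hA3 : A * AD = AD * A)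
    (hB1 : B ^ (iB + 1) * BD = B ^ iB) (hB2 : BD * B * BD = BD) (hB3 : B * BD = BD * B)
    (hc : A * (1 - A * AD) * B = B * (A * (1 - A * AD)))
    (h0 : A * (A * AD) * B = 0) :
    let Api := (1 : Matrix (Fin n) (Fin n) DC) - A * AD
    let Bpi := (1 : Matrix (Fin n) (Fin n) DC) - B * BD
    let N := Matrix.fromBlocks A B 1 0
    let X := Matrix.fromBlocks
      (∑ i ∈ Finset.range iB, Bpi * B ^ i * AD ^ (2 * i + 1)) (B * BD)
      ((∑ i ∈ Finset.range iB, Bpi * B ^ i * AD ^ (2 * i + 2)) + BD * Api)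
      (-(A * Api * BD))
    ∃ s, N ^ (s + 1) * X = N ^ s ∧ X * N * X = X ∧ N * X = X * N := by
  obtain ⟨s, hs⟩ := stmt10_general ⟨hA1, hA2, hA3⟩ ⟨hB1, hB2, hB3⟩ hc h0
  exact ⟨s, hs.pow_succ_mul, hs.mul_mul_self, hs.commute.eq⟩
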